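/- Let p be a positive integer and suppose f(z) = ∑_{n=0}^∞ a_{pn} z^{pn} on 𝔻. Then for every r with 0 ≤ r^p ≤ 1/(2+|a_0|): ∑_{n=0}^∞ |a_{pn}| r^{pn} + (1/(1+|a_0|) + r^p/(1-r^p)) · ∑_{n=1}^∞ |a_{pn}|² r^{2pn} ≤ 1. -/

import Mathlib

/-!
Multiplication by a polynomial `q` with `|q| ≤ 1` on the unit circle contracts the `ℓ²` norm of
coefficients (Parseval), so `|[z ^ N] q P²| ≤ ∑ |P_j|²` for every polynomial `P`. Choosing
`P = 1 + z ^ k u` with `u` built from the conjugated coefficients of `q` yields Carlson's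
inequalities
`|a_{2n+1}| ≤ 1 - |a_0|² - ⋯ - |a_n|²` and
`|a_{2n}| ≤ 1 - |a_0|² - ⋯ - |a_{n-1}|² - |a_n|² / (1 + |a_0|)`,
which extend from polynomials to analytic functions bounded by `1` by dilating and truncating.
Multiplying the `N`-th inequality by `r ^ N` and summing over `N ≥ 1` gives
`∑_{n≥1} |a_n| r^n + (1/(1+|a_0|) + r/(1-r)) ∑_{n≥1} |a_n|² r^{2n} ≤ (1-|a_0|²) r/(1-r)`,
whose right-hand side is at most `1 - |a_0|` when `r ≤ 1/(2+|a_0|)`. Gaps of length `p` only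
replace `z` by `z ^ p`.
-/

open Polynomial Finset Filter Topology ComplexConjugate

section CoeffSqSum

/-- The squared `ℓ²` norm of the coefficients of a complex polynomial, i.e. its squared norm in the
Hardy space `H²`. -/
noncomputable def coeffSqSum (p : ℂ[X]) : ℝ := ∑ i ∈ p.support, ‖p.coeff i‖ ^ 2

theorem coeffSqSum_eq_sum_of_support_subset {p : ℂ[X]} {s : Finset ℕ} (hs : p.support ⊆ s) :
    coeffSqSum p = ∑ i ∈ s, ‖p.coeff i‖ ^ 2 :=
  sum_subset hs fun i _ hi => by simp [notMem_support_iff.1 hi]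

theorem sum_sq_norm_coeff_le_coeffSqSum (p : ℂ[X]) (s : Finset ℕ) :
    ∑ i ∈ s, ‖p.coeff i‖ ^ 2 ≤ coeffSqSum p := by
  rw [coeffSqSum_eq_sum_of_support_subset (subset_union_right (s₁ := s))]
  exact sum_le_sum_of_subset_of_nonneg subset_union_left fun _ _ _ => by positivity

theorem coeffSqSum_one_add_X_pow_mul {k : ℕ} (hk : 0 < k) (u : ℂ[X]) :
    coeffSqSum (1 + X ^ k * u) = 1 + coeffSqSum u := by
  have coeff_low : ∀ i ∈ range k, ‖(1 + X ^ k * u).coeff i‖ ^ 2 = if i = 0 then 1 else 0 := by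
    intro i hi
    rw [coeff_add, coeff_X_pow_mul', if_neg (by simpa using hi), coeff_one]
    split_ifs <;> simp_all
  have coeff_high (i : ℕ) : (1 + X ^ k * u).coeff (k + i) = u.coeff i := by
    rw [coeff_add, add_comm k i, coeff_X_pow_mul, coeff_one, if_neg (by omega), zero_add]
  have hsupp : (1 + X ^ k * u).support ⊆ range (k + (u.natDegree + 1)) := by
    intro i hi
    by_contra h
    obtain ⟨j, rfl⟩ := Nat.exists_eq_add_of_le (show k ≤ i by simp at h; omega)
    rw [mem_support_iff, coeff_high] at hi
    exact hi (coeff_eq_zero_of_natDegree_lt (by simp at h; omega))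
  rw [coeffSqSum_eq_sum_of_support_subset hsupp, sum_range_add, sum_congr rfl coeff_low,
    coeffSqSum_eq_sum_of_support_subset supp_subset_range_natDegree_succ]
  simp [coeff_high, hk]

theorem norm_coeff_mul_le (p q : ℂ[X]) (n : ℕ) :
    ‖(p * q).coeff n‖ ≤ (coeffSqSum p + coeffSqSum q) / 2 := by
  have am_gm (x y : ℝ) : x * y ≤ (x ^ 2 + y ^ 2) / 2 := by linarith [two_mul_le_add_sq x y]
  calc ‖(p * q).coeff n‖
      ≤ ∑ ij ∈ antidiagonal n, ‖p.coeff ij.1‖ * ‖q.coeff ij.2‖ := by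
        rw [coeff_mul]
        exact (norm_sum_le _ _).trans_eq (sum_congr rfl fun _ _ => norm_mul _ _)
    _ ≤ ∑ ij ∈ antidiagonal n, (‖p.coeff ij.1‖ ^ 2 + ‖q.coeff ij.2‖ ^ 2) / 2 :=
        sum_le_sum fun _ _ => am_gm _ _
    _ = (∑ i ∈ range (n + 1), ‖p.coeff i‖ ^ 2 + ∑ i ∈ range (n + 1), ‖q.coeff i‖ ^ 2) / 2 := by
        rw [← sum_div, sum_add_distrib, Nat.sum_antidiagonal_eq_sum_range_succ_mk,
          Nat.sum_antidiagonal_eq_sum_range_succ_mk, sum_flip fun j => ‖q.coeff j‖ ^ 2]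
    _ ≤ (coeffSqSum p + coeffSqSum q) / 2 := by
        gcongr <;> exact sum_sq_norm_coeff_le_coeffSqSum _ _

theorem coeffSqSum_mul_le {q : ℂ[X]} (hq : ∀ z ∈ Metric.sphere (0 : ℂ) 1, ‖q.eval z‖ ≤ 1)
    (p : ℂ[X]) : coeffSqSum (q * p) ≤ coeffSqSum p := by
  have integrable (s : ℂ[X]) : CircleIntegrable (fun z => ‖s.eval z‖ ^ 2) 0 1 :=
    (by fun_prop : Continuous fun z => ‖s.eval z‖ ^ 2).continuousOn.circleIntegrable zero_le_one
  rw [coeffSqSum, coeffSqSum, sum_sq_norm_coeff_eq_circleAverage,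
    sum_sq_norm_coeff_eq_circleAverage]
  refine Real.circleAverage_mono (integrable _) (integrable _) fun z hz => ?_
  rw [abs_one] at hz
  rw [eval_mul, norm_mul]
  gcongr
  exact mul_le_of_le_one_left (norm_nonneg _) (hq z hz)

theorem norm_coeff_mul_sq_le {q : ℂ[X]} (hq : ∀ z ∈ Metric.sphere (0 : ℂ) 1, ‖q.eval z‖ ≤ 1)
    (p : ℂ[X]) (n : ℕ) : ‖(q * p ^ 2).coeff n‖ ≤ coeffSqSum p := by
  have h := norm_coeff_mul_le (q * p) p n
  rw [mul_assoc, ← sq] at h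
  linarith [coeffSqSum_mul_le hq p]

end CoeffSqSum

section Carlson

theorem coeff_mul_one_add_X_pow_mul_sq {R : Type*} [CommSemiring R] (q u : R[X]) {n k : ℕ}
    (hnk : n ≤ k) :
    (q * (1 + X ^ k * u) ^ 2).coeff (n + k) =
      q.coeff (n + k) + 2 * (q * u).coeff n + if n = k then q.coeff 0 * u.coeff 0 ^ 2 else 0 := by
  have expand : q * (1 + X ^ k * u) ^ 2 =
      q + C 2 * (X ^ k * (q * u)) + X ^ (2 * k) * (q * u ^ 2) := by
    rw [map_ofNat]
    ring
  rw [expand, coeff_add, coeff_add, coeff_C_mul, coeff_X_pow_mul, coeff_X_pow_mul']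
  congr 1
  by_cases h : n = k
  · simp [h, two_mul, sq, mul_coeff_zero]
  · rw [if_neg h, if_neg (by omega)]

/-- The polynomial `∑_{m ≤ n} η v_m conj(q_m) z^{n-m}`. It is the test polynomial of Carlson's
inequality: its product with `q` has `n`-th coefficient `η ∑_{m ≤ n} v_m |q_m|²`. -/
noncomputable def carlsonPoly (q : ℂ[X]) (η : ℂ) (v : ℕ → ℝ) (n : ℕ) : ℂ[X] :=
  PowerSeries.trunc (n + 1)
    (PowerSeries.mk fun j => η * (v (n - j) * conj (q.coeff (n - j))))

theorem coeff_carlsonPoly (q : ℂ[X]) (η : ℂ) (v : ℕ → ℝ) (n j : ℕ) :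
    (carlsonPoly q η v n).coeff j =
      if j < n + 1 then η * (v (n - j) * conj (q.coeff (n - j))) else 0 := by
  rw [carlsonPoly, PowerSeries.coeff_trunc, PowerSeries.coeff_mk]

theorem coeff_mul_carlsonPoly (q : ℂ[X]) (η : ℂ) (v : ℕ → ℝ) (n : ℕ) :
    (q * carlsonPoly q η v n).coeff n =
      η * ((∑ m ∈ range (n + 1), v m * ‖q.coeff m‖ ^ 2 : ℝ) : ℂ) := by
  rw [coeff_mul, Nat.sum_antidiagonal_eq_sum_range_succ_mk, Complex.ofReal_sum, mul_sum]
  refine sum_congr rfl fun m hm => ?_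
  rw [coeff_carlsonPoly, if_pos (by omega), Nat.sub_sub_self (mem_range_succ_iff.1 hm)]
  push_cast
  rw [← Complex.mul_conj']
  ring

theorem coeffSqSum_carlsonPoly (q : ℂ[X]) {η : ℂ} (hη : ‖η‖ = 1) (v : ℕ → ℝ) (n : ℕ) :
    coeffSqSum (carlsonPoly q η v n) = ∑ m ∈ range (n + 1), v m ^ 2 * ‖q.coeff m‖ ^ 2 := by
  have hsupp : (carlsonPoly q η v n).support ⊆ range (n + 1) := fun j hj => by
    rw [mem_support_iff, coeff_carlsonPoly, ite_ne_right_iff] at hj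
    exact mem_range.2 hj.1
  rw [coeffSqSum_eq_sum_of_support_subset hsupp,
    ← sum_flip fun m => v m ^ 2 * ‖q.coeff m‖ ^ 2]
  refine sum_congr rfl fun j hj => ?_
  rw [coeff_carlsonPoly, if_pos (mem_range.1 hj)]
  simp [hη, mul_pow]

theorem norm_coeff_add_two_mul_sum_le {q : ℂ[X]}
    (hq : ∀ z ∈ Metric.sphere (0 : ℂ) 1, ‖q.eval z‖ ≤ 1) (v : ℕ → ℝ) {n k : ℕ}
    (hk : 0 < k) (hnk : n ≤ k) :
    ‖q.coeff (n + k)‖ + 2 * ∑ m ∈ range (n + 1), v m * ‖q.coeff m‖ ^ 2 ≤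
      1 + ∑ m ∈ range (n + 1), v m ^ 2 * ‖q.coeff m‖ ^ 2 +
        if n = k then ‖q.coeff 0‖ * (v n ^ 2 * ‖q.coeff n‖ ^ 2) else 0 := by
  obtain ⟨η, hη, hqη⟩ := RCLike.exists_norm_mul_eq_self (q.coeff (n + k))
  set u := carlsonPoly q η v n
  set T := ‖q.coeff (n + k)‖ + 2 * ∑ m ∈ range (n + 1), v m * ‖q.coeff m‖ ^ 2 with hT
  set E := if n = k then q.coeff 0 * u.coeff 0 ^ 2 else 0 with hE
  have coeff_eq : (q * (1 + X ^ k * u) ^ 2).coeff (n + k) = η * (T : ℂ) + E := by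
    rw [coeff_mul_one_add_X_pow_mul_sq q u hnk, coeff_mul_carlsonPoly, hT, ← hE,
      Complex.ofReal_add, Complex.ofReal_mul, Complex.ofReal_ofNat]
    linear_combination -hqη
  have norm_le : ‖η * (T : ℂ) + E‖ ≤ 1 + ∑ m ∈ range (n + 1), v m ^ 2 * ‖q.coeff m‖ ^ 2 := by
    rw [← coeff_eq, ← coeffSqSum_carlsonPoly q hη v n, ← coeffSqSum_one_add_X_pow_mul hk]
    exact norm_coeff_mul_sq_le hq _ _
  have norm_E : ‖E‖ = if n = k then ‖q.coeff 0‖ * (v n ^ 2 * ‖q.coeff n‖ ^ 2) else 0 := by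
    rw [hE, apply_ite norm, norm_zero, coeff_carlsonPoly, if_pos n.succ_pos]
    simp [hη, mul_pow]
  calc T ≤ ‖η * (T : ℂ)‖ := by
        rw [norm_mul, hη, one_mul, Complex.norm_real]
        exact le_abs_self T
    _ ≤ ‖η * (T : ℂ) + E‖ + ‖E‖ := norm_le_add_norm_add _ _
    _ ≤ _ := by
        rw [← norm_E]
        gcongr

/-- The weight of `|a_m|²` in Carlson's inequality for `|a_N|`, where `α` stands for `|a_0|`. -/
noncomputable def carlsonWeight (α : ℝ) (N m : ℕ) : ℝ :=
  if 2 * m < N then 1 else if 2 * m = N then 1 / (1 + α) else 0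

theorem carlsonWeight_of_lt (α : ℝ) {N m : ℕ} (h : 2 * m < N) : carlsonWeight α N m = 1 :=
  if_pos h

theorem carlsonWeight_two_mul_self (α : ℝ) (m : ℕ) : carlsonWeight α (2 * m) m = 1 / (1 + α) := by
  simp [carlsonWeight]

theorem carlsonWeight_of_gt (α : ℝ) {N m : ℕ} (h : N < 2 * m) : carlsonWeight α N m = 0 := by
  rw [carlsonWeight, if_neg h.not_gt, if_neg h.ne']

theorem carlsonWeight_nonneg {α : ℝ} (hα : 0 ≤ α) (N m : ℕ) : 0 ≤ carlsonWeight α N m := by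
  unfold carlsonWeight
  split_ifs <;> positivity

theorem hasSum_carlsonWeight_mul_pow (α : ℝ) {r : ℝ} (hr : |r| < 1) (m : ℕ) :
    HasSum (fun N => carlsonWeight α N m * r ^ N)
      ((1 / (1 + α) + r / (1 - r)) * r ^ (2 * m)) := by
  have low_terms : ∑ N ∈ range (2 * m), carlsonWeight α N m * r ^ N = 0 :=
    sum_eq_zero fun N hN => by rw [carlsonWeight_of_gt α (mem_range.1 hN), zero_mul]
  have high_term (N : ℕ) : carlsonWeight α (N + (2 * m + 1)) m * r ^ (N + (2 * m + 1)) =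
      r ^ (2 * m + 1) * r ^ N := by
    rw [carlsonWeight_of_lt α (by omega), one_mul, pow_add, mul_comm]
  have value_eq : (1 / (1 + α) + r / (1 - r)) * r ^ (2 * m) - 1 / (1 + α) * r ^ (2 * m) =
      r ^ (2 * m + 1) * (1 - r)⁻¹ := by ring
  rw [← hasSum_nat_add_iff' (2 * m + 1), sum_range_succ, low_terms, carlsonWeight_two_mul_self,
    zero_add, value_eq]
  simpa only [high_term] using (hasSum_geometric_of_abs_lt_one hr).mul_left (r ^ (2 * m + 1))

theorem sum_range_carlsonWeight_mul_le {α : ℝ} (hα : 0 ≤ α) {b : ℕ → ℝ} (hb : ∀ m, 0 ≤ b m)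
    (N M : ℕ) :
    ∑ m ∈ range M, carlsonWeight α N m * b m ≤
      ∑ m ∈ range (N / 2 + 1), carlsonWeight α N m * b m :=
  calc ∑ m ∈ range M, carlsonWeight α N m * b m
      ≤ ∑ m ∈ range (max M (N / 2 + 1)), carlsonWeight α N m * b m :=
        sum_le_sum_of_subset_of_nonneg (range_mono (le_max_left _ _)) fun m _ _ =>
          mul_nonneg (carlsonWeight_nonneg hα N m) (hb m)
    _ = ∑ m ∈ range (N / 2 + 1), carlsonWeight α N m * b m := by
        refine (sum_subset (range_mono (le_max_right _ _)) fun m _ hm => ?_).symm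
        rw [carlsonWeight_of_gt α (by grind), zero_mul]

theorem norm_coeff_add_sum_carlsonWeight_le_one {q : ℂ[X]}
    (hq : ∀ z ∈ Metric.sphere (0 : ℂ) 1, ‖q.eval z‖ ≤ 1) {α : ℝ} (hα : ‖q.coeff 0‖ ≤ α)
    {N : ℕ} (hN : 0 < N) :
    ‖q.coeff N‖ + ∑ m ∈ range (N / 2 + 1), carlsonWeight α N m * ‖q.coeff m‖ ^ 2 ≤ 1 := by
  obtain ⟨n, k, hnk, hkn, rfl⟩ : ∃ n k, n ≤ k ∧ k ≤ n + 1 ∧ N = n + k :=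
    ⟨N / 2, N - N / 2, by omega, by omega, by omega⟩
  rw [show (n + k) / 2 = n by omega]
  set w := carlsonWeight α (n + k)
  have w_eq_one (m : ℕ) (hm : 2 * m < n + k) : w m = 1 := carlsonWeight_of_lt α hm
  have main := norm_coeff_add_two_mul_sum_le hq w (by omega : 0 < k) hnk
  have hα1 : 0 < 1 + α := by linarith [norm_nonneg (q.coeff 0)]
  have low_terms : ∑ m ∈ range n, w m ^ 2 * ‖q.coeff m‖ ^ 2 =
      ∑ m ∈ range n, w m * ‖q.coeff m‖ ^ 2 := sum_congr rfl fun m hm => by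
    rw [w_eq_one m (by grind), one_pow]
  have top_term : (w n ^ 2 * ‖q.coeff n‖ ^ 2 +
      if n = k then ‖q.coeff 0‖ * (w n ^ 2 * ‖q.coeff n‖ ^ 2) else 0) ≤
        w n * ‖q.coeff n‖ ^ 2 := by
    split_ifs with h
    · have hw : w n = 1 / (1 + α) := by
        simp only [w, ← h, ← two_mul, carlsonWeight_two_mul_self]
      calc w n ^ 2 * ‖q.coeff n‖ ^ 2 + ‖q.coeff 0‖ * (w n ^ 2 * ‖q.coeff n‖ ^ 2)
          = (1 + ‖q.coeff 0‖) * (w n ^ 2 * ‖q.coeff n‖ ^ 2) := by ring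
        _ ≤ (1 + α) * (w n ^ 2 * ‖q.coeff n‖ ^ 2) := by gcongr
        _ = w n * ‖q.coeff n‖ ^ 2 := by rw [hw]; field_simp
    · rw [w_eq_one n (by omega), one_pow, add_zero]
  rw [sum_range_succ] at main ⊢
  rw [sum_range_succ, low_terms] at main
  linarith

end Carlson

section SchurSeq

/-- `a` is the sequence of Taylor coefficients at `0` of a function in the Schur class, i.e. of an
analytic function on the open unit disk bounded by `1`. -/
def IsSchurSeq (a : ℕ → ℂ) : Prop :=
  ∀ z : ℂ, ‖z‖ < 1 → ∃ w, HasSum (fun n => a n * z ^ n) w ∧ ‖w‖ ≤ 1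

namespace IsSchurSeq

variable {a : ℕ → ℂ}

theorem norm_zero_le_one (ha : IsSchurSeq a) : ‖a 0‖ ≤ 1 := by
  obtain ⟨w, hw, hw1⟩ := ha 0 (by simp)
  have h0 : HasSum (fun n => a n * 0 ^ n) (a 0 * 0 ^ 0) :=
    hasSum_single 0 fun n hn => by simp [hn]
  rwa [hw.unique h0, pow_zero, mul_one] at hw1

theorem summable_norm_mul_pow (ha : IsSchurSeq a) {r : ℝ} (hr0 : 0 ≤ r) (hr1 : r < 1) :
    Summable fun n => ‖a n‖ * r ^ n := by
  obtain ⟨w, hw, -⟩ := ha r (by simpa [abs_of_nonneg hr0] using hr1)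
  simpa [abs_of_nonneg hr0] using hw.summable.norm

/-- Dilating by `c` makes the Taylor series converge uniformly on the closed disk, and the spare
factor `c` absorbs the error made in truncating it. -/
theorem exists_polynomial_coeff_eq_pow_mul (ha : IsSchurSeq a) {c : ℝ} (hc0 : 0 < c) (hc1 : c < 1)
    (N : ℕ) :
    ∃ q : ℂ[X], (∀ z ∈ Metric.sphere (0 : ℂ) 1, ‖q.eval z‖ ≤ 1) ∧
      ∀ n ≤ N, q.coeff n = c ^ (n + 1) * a n := by
  have hsum := ha.summable_norm_mul_pow hc0.le hc1
  obtain ⟨M, tail_le, hNM⟩ : ∃ M, ∑' n, ‖a (n + M)‖ * c ^ (n + M) ≤ c⁻¹ - 1 ∧ N < M := by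
    have hpos : 0 < c⁻¹ - 1 := sub_pos.2 ((one_lt_inv₀ hc0).2 hc1)
    exact (((tendsto_sum_nat_add fun n => ‖a n‖ * c ^ n).eventually_le_const hpos).and
      (eventually_gt_atTop N)).exists
  refine ⟨PowerSeries.trunc M (PowerSeries.mk fun n => c ^ (n + 1) * a n), fun z hz => ?_,
    fun n hn => by rw [PowerSeries.coeff_trunc, if_pos (by omega), PowerSeries.coeff_mk]⟩
  have norm_z : ‖z‖ = 1 := mem_sphere_zero_iff_norm.1 hz
  have norm_term (n : ℕ) : ‖a n * (c * z) ^ n‖ = ‖a n‖ * c ^ n := by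
    simp [norm_z, abs_of_pos hc0]
  obtain ⟨w, hw, hw1⟩ := ha (c * z) (by simpa [norm_z, abs_of_pos hc0] using hc1)
  have eval_eq : (PowerSeries.trunc M (PowerSeries.mk fun n => (c : ℂ) ^ (n + 1) * a n)).eval z =
      c * (w - ∑' n, a (n + M) * (c * z) ^ (n + M)) := by
    rw [← hw.tsum_eq, ← hw.summable.sum_add_tsum_nat_add M, add_sub_cancel_right, mul_sum,
      Polynomial.eval, PowerSeries.eval₂_trunc_eq_sum_range]
    refine sum_congr rfl fun n _ => ?_
    rw [PowerSeries.coeff_mk, RingHom.id_apply]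
    ring
  have tsum_tail_le : ‖∑' n, a (n + M) * (c * z) ^ (n + M)‖ ≤ c⁻¹ - 1 := by
    refine (norm_tsum_le_tsum_norm ?_).trans ?_ <;> simp only [norm_term]
    · exact (summable_nat_add_iff M).2 hsum
    · exact tail_le
  calc ‖(PowerSeries.trunc M (PowerSeries.mk fun n => (c : ℂ) ^ (n + 1) * a n)).eval z‖
      ≤ c * (1 + (c⁻¹ - 1)) := by
        rw [eval_eq, norm_mul, Complex.norm_of_nonneg hc0.le]
        gcongr
        exact (norm_sub_le _ _).trans (add_le_add hw1 tsum_tail_le)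
    _ = 1 := by field_simp; ring

theorem norm_add_sum_carlsonWeight_le_one (ha : IsSchurSeq a) {N : ℕ} (hN : 0 < N) (M : ℕ) :
    ‖a N‖ + ∑ m ∈ range M, carlsonWeight ‖a 0‖ N m * ‖a m‖ ^ 2 ≤ 1 := by
  have dilated : ∀ c ∈ Set.Ioo (0 : ℝ) 1, c ^ (N + 1) * ‖a N‖ +
      ∑ m ∈ range (N / 2 + 1), carlsonWeight ‖a 0‖ N m * (c ^ (m + 1) * ‖a m‖) ^ 2 ≤ 1 := by
    rintro c ⟨hc0, hc1⟩
    obtain ⟨q, hq, coeff_q⟩ := ha.exists_polynomial_coeff_eq_pow_mul hc0 hc1 N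
    have norm_coeff_q (n : ℕ) (hn : n ≤ N) : ‖q.coeff n‖ = c ^ (n + 1) * ‖a n‖ := by
      rw [coeff_q n hn, norm_mul, norm_pow, Complex.norm_of_nonneg hc0.le]
    have norm_coeff_zero_le : ‖q.coeff 0‖ ≤ ‖a 0‖ := by
      rw [norm_coeff_q 0 N.zero_le, zero_add, pow_one]
      exact mul_le_of_le_one_left (norm_nonneg _) hc1.le
    have carlson := norm_coeff_add_sum_carlsonWeight_le_one hq norm_coeff_zero_le hN
    rw [norm_coeff_q N le_rfl] at carlson
    refine le_of_eq_of_le ?_ carlson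
    congr 1
    refine sum_congr rfl fun m hm => ?_
    rw [norm_coeff_q m (by grind)]
  have limit : Tendsto (fun c : ℝ => c ^ (N + 1) * ‖a N‖ +
      ∑ m ∈ range (N / 2 + 1), carlsonWeight ‖a 0‖ N m * (c ^ (m + 1) * ‖a m‖) ^ 2) (𝓝[<] 1)
      (𝓝 (‖a N‖ + ∑ m ∈ range (N / 2 + 1), carlsonWeight ‖a 0‖ N m * ‖a m‖ ^ 2)) :=
    tendsto_nhdsWithin_of_tendsto_nhds <|
      Continuous.tendsto' (by fun_prop) _ _ (by simp only [one_pow, one_mul])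
  calc ‖a N‖ + ∑ m ∈ range M, carlsonWeight ‖a 0‖ N m * ‖a m‖ ^ 2
      ≤ ‖a N‖ + ∑ m ∈ range (N / 2 + 1), carlsonWeight ‖a 0‖ N m * ‖a m‖ ^ 2 := by
        gcongr 1
        exact sum_range_carlsonWeight_mul_le (norm_nonneg _) (fun m => by positivity) N M
    _ ≤ 1 := le_of_tendsto limit <| eventually_of_mem (Ioo_mem_nhdsLT one_pos) dilated

theorem norm_succ_add_sum_carlsonWeight_le (ha : IsSchurSeq a) (N M : ℕ) :
    ‖a (N + 1)‖ + ∑ m ∈ range M, carlsonWeight ‖a 0‖ (N + 1) (m + 1) * ‖a (m + 1)‖ ^ 2 ≤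
      1 - ‖a 0‖ ^ 2 := by
  have carlson := ha.norm_add_sum_carlsonWeight_le_one N.succ_pos (M + 1)
  rw [sum_range_succ', carlsonWeight_of_lt _ (by omega), one_mul] at carlson
  linarith

theorem tsum_norm_mul_pow_add_sum_sq_le (ha : IsSchurSeq a) {r : ℝ} (hr0 : 0 ≤ r) (hr1 : r < 1)
    (M : ℕ) :
    ∑' n, ‖a (n + 1)‖ * r ^ (n + 1) +
        (1 / (1 + ‖a 0‖) + r / (1 - r)) * ∑ m ∈ range M, ‖a (m + 1)‖ ^ 2 * r ^ (2 * (m + 1)) ≤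
      (1 - ‖a 0‖ ^ 2) * (r / (1 - r)) := by
  set K := 1 / (1 + ‖a 0‖) + r / (1 - r)
  set W := carlsonWeight ‖a 0‖
  have hasSum_linear : HasSum (fun N => ‖a (N + 1)‖ * r ^ (N + 1))
      (∑' n, ‖a (n + 1)‖ * r ^ (n + 1)) :=
    ((summable_nat_add_iff 1).2 (ha.summable_norm_mul_pow hr0 hr1)).hasSum
  have abs_r_lt_one : |r| < 1 := by rwa [abs_of_nonneg hr0]
  have hasSum_weight (m : ℕ) :
      HasSum (fun N => W (N + 1) (m + 1) * r ^ (N + 1)) (K * r ^ (2 * (m + 1))) := by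
    have hasSum_all := hasSum_carlsonWeight_mul_pow ‖a 0‖ abs_r_lt_one (m + 1)
    rwa [← hasSum_nat_add_iff' 1, sum_range_one, carlsonWeight_of_gt _ (by omega), zero_mul,
      sub_zero] at hasSum_all
  have hasSum_quadratic : HasSum
      (fun N => ∑ m ∈ range M, ‖a (m + 1)‖ ^ 2 * (W (N + 1) (m + 1) * r ^ (N + 1)))
      (∑ m ∈ range M, ‖a (m + 1)‖ ^ 2 * (K * r ^ (2 * (m + 1)))) :=
    hasSum_sum fun m _ => (hasSum_weight m).mul_left _
  have hasSum_geometric : HasSum (fun N => (1 - ‖a 0‖ ^ 2) * r ^ (N + 1))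
      ((1 - ‖a 0‖ ^ 2) * (r / (1 - r))) := by
    simpa only [← pow_succ', ← div_eq_mul_inv] using
      ((hasSum_geometric_of_lt_one hr0 hr1).mul_left r).mul_left (1 - ‖a 0‖ ^ 2)
  have termwise (N : ℕ) : ‖a (N + 1)‖ * r ^ (N + 1) +
      ∑ m ∈ range M, ‖a (m + 1)‖ ^ 2 * (W (N + 1) (m + 1) * r ^ (N + 1)) ≤
        (1 - ‖a 0‖ ^ 2) * r ^ (N + 1) := by
    refine le_of_eq_of_le ?_ (mul_le_mul_of_nonneg_right
      (ha.norm_succ_add_sum_carlsonWeight_le N M) (pow_nonneg hr0 (N + 1)))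
    rw [add_mul, sum_mul]
    congr! 2
    ring
  refine le_of_eq_of_le ?_ (hasSum_le termwise (hasSum_linear.add hasSum_quadratic)
    hasSum_geometric)
  rw [mul_sum]
  simp only [mul_left_comm]

theorem tsum_norm_mul_pow_add_tsum_sq_le (ha : IsSchurSeq a) {r : ℝ} (hr0 : 0 ≤ r) (hr1 : r < 1) :
    ∑' n, ‖a (n + 1)‖ * r ^ (n + 1) +
        (1 / (1 + ‖a 0‖) + r / (1 - r)) * ∑' n, ‖a (n + 1)‖ ^ 2 * r ^ (2 * (n + 1)) ≤
      (1 - ‖a 0‖ ^ 2) * (r / (1 - r)) := by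
  have hK : 0 < 1 / (1 + ‖a 0‖) + r / (1 - r) := by
    have := sub_pos.2 hr1
    positivity
  rw [← le_sub_iff_add_le', ← le_div_iff₀' hK]
  refine Real.tsum_le_of_sum_range_le (fun n => by positivity) fun M => ?_
  rw [le_div_iff₀' hK, le_sub_iff_add_le']
  exact ha.tsum_norm_mul_pow_add_sum_sq_le hr0 hr1 M

theorem tsum_norm_mul_pow_add_tsum_sq_le_one (ha : IsSchurSeq a) {r : ℝ} (hr0 : 0 ≤ r)
    (hr : r ≤ 1 / (2 + ‖a 0‖)) :
    ∑' n, ‖a n‖ * r ^ n +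
      (1 / (1 + ‖a 0‖) + r / (1 - r)) * ∑' n, ‖a (n + 1)‖ ^ 2 * r ^ (2 * (n + 1)) ≤ 1 := by
  rw [le_div_iff₀ (by positivity)] at hr
  have hr1 : r < 1 := by nlinarith [mul_nonneg hr0 (norm_nonneg (a 0))]
  have rhs_le : (1 - ‖a 0‖ ^ 2) * (r / (1 - r)) ≤ 1 - ‖a 0‖ := by
    have ratio_le : (1 + ‖a 0‖) * (r / (1 - r)) ≤ 1 := by
      rw [← mul_div_assoc, div_le_one (sub_pos.2 hr1)]
      linarith
    calc (1 - ‖a 0‖ ^ 2) * (r / (1 - r))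
        = (1 - ‖a 0‖) * ((1 + ‖a 0‖) * (r / (1 - r))) := by ring
      _ ≤ 1 - ‖a 0‖ := mul_le_of_le_one_right (sub_nonneg.2 ha.norm_zero_le_one) ratio_le
  rw [(ha.summable_norm_mul_pow hr0 hr1).tsum_eq_zero_add, pow_zero, mul_one]
  linarith [ha.tsum_norm_mul_pow_add_tsum_sq_le hr0 hr1]

end IsSchurSeq

theorem isSchurSeq_of_hasSum_pow_mul {p : ℕ} (hp : 0 < p) {f : ℂ → ℂ} {a : ℕ → ℂ}
    (hb : ∀ z ∈ Metric.ball (0 : ℂ) 1, ‖f z‖ ≤ 1)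
    (hs : ∀ z ∈ Metric.ball (0 : ℂ) 1, HasSum (fun n => a n * z ^ (p * n)) (f z)) :
    IsSchurSeq a := by
  intro w hw
  obtain ⟨z, rfl⟩ := IsAlgClosed.exists_pow_nat_eq w hp
  have hz : z ∈ Metric.ball (0 : ℂ) 1 := by
    rw [norm_pow, pow_lt_one_iff_of_nonneg (norm_nonneg z) hp.ne'] at hw
    rwa [mem_ball_zero_iff]
  exact ⟨f z, by simpa only [pow_mul] using hs z hz, hb z hz⟩

end SchurSeq

/-- Corollary 1(a): let `f(z) = ∑_{n=0}^∞ a_{pn} z^{pn}` be a bounded analytic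
self-map of the unit disk (here `a n` denotes the coefficient `a_{pn}`).
Then for `0 ≤ r` with `r^p ≤ 1/(2+|a₀|)`:
`∑_{n=0}^∞ |a_{pn}| r^{pn}
  + (1/(1+|a₀|) + r^p/(1-r^p)) ∑_{n=1}^∞ |a_{pn}|² r^{2pn} ≤ 1`. -/
theorem stmt9 (p : ℕ) (hp : 0 < p) (f : ℂ → ℂ) (a : ℕ → ℂ)
    (hf : DifferentiableOn ℂ f (Metric.ball 0 1))
    (hb : ∀ z ∈ Metric.ball (0 : ℂ) 1, ‖f z‖ ≤ 1)
    (hs : ∀ z ∈ Metric.ball (0 : ℂ) 1, HasSum (fun n => a n * z ^ (p * n)) (f z))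
    (r : ℝ) (hr0 : 0 ≤ r) (hr : r ^ p ≤ 1 / (2 + ‖a 0‖)) :
    (∑' n : ℕ, ‖a n‖ * r ^ (p * n))
      + (1 / (1 + ‖a 0‖) + r ^ p / (1 - r ^ p))
        * ∑' n : ℕ, ‖a (n + 1)‖ ^ 2 * r ^ (2 * p * (n + 1))
      ≤ 1 := by
  have ha : IsSchurSeq a := isSchurSeq_of_hasSum_pow_mul hp hb hs
  have bohr := ha.tsum_norm_mul_pow_add_tsum_sq_le_one (pow_nonneg hr0 p) hr
  have pow_eq (n : ℕ) : r ^ (2 * p * (n + 1)) = (r ^ p) ^ (2 * (n + 1)) := by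
    rw [← pow_mul]
    congr 1
    ring
  simpa only [pow_eq, pow_mul r p] using bohr
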